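/- For a ring R the following are equivalent: (1) R is weakly quasi-Frobenius; (2) R is a left and right IF-ring; (3) R is left coherent and left FP-injective, and every cyclic finitely presented left R-module embeds in a free left R-module; (4) every FP-injective left R-module and every FP-injective right R-module is flat; (5) every injective left R-module and every injective right R-module is flat. -/

import Mathlib

/-!
Common definitions: rings are associative with identity, not necessarily commutative.
Left `R`-modules are `Module R M`; right `R`-modules are `Module Rᵐᵒᵖ M`.
-/

universe u

open MulOpposite Function Pointwise

section Defs

variable (R : Type u) [Ring R]

/-- Defining relations of the tensor product `K ⊗_R M` of a right `R`-module `K`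
and a left `R`-module `M`, inside the free abelian group on `K × M`. -/
def TensorRels (K M : Type u) [AddCommGroup K] [Module Rᵐᵒᵖ K]
    [AddCommGroup M] [Module R M] : AddSubgroup (FreeAbelianGroup (K × M)) :=
  AddSubgroup.closure
    ({x | ∃ k₁ k₂ m, x = FreeAbelianGroup.of (k₁ + k₂, m) - FreeAbelianGroup.of (k₁, m) -
        FreeAbelianGroup.of (k₂, m)} ∪
     {x | ∃ k m₁ m₂, x = FreeAbelianGroup.of (k, m₁ + m₂) - FreeAbelianGroup.of (k, m₁) -
        FreeAbelianGroup.of (k, m₂)} ∪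
     {x | ∃ (r : R) (k : K) (m : M),
        x = FreeAbelianGroup.of (op r • k, m) - FreeAbelianGroup.of (k, r • m)})

/-- The tensor product `K ⊗_R M` of a right `R`-module `K` and a left `R`-module `M`
over the (not necessarily commutative) ring `R`, as an abelian group. -/
def NCTensor (K M : Type u) [AddCommGroup K] [Module Rᵐᵒᵖ K]
    [AddCommGroup M] [Module R M] : Type u :=
  FreeAbelianGroup (K × M) ⧸ TensorRels R K M

instance (K M : Type u) [AddCommGroup K] [Module Rᵐᵒᵖ K] [AddCommGroup M] [Module R M] :
    AddCommGroup (NCTensor R K M) :=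
  QuotientAddGroup.Quotient.addCommGroup _

/-- The map `μ ⊗ ν : K ⊗_R M → K' ⊗_R M'` induced by a map `μ` of right `R`-modules
and a map `ν` of left `R`-modules. -/
def tensorCongr {K K' M M' : Type u} [AddCommGroup K] [Module Rᵐᵒᵖ K]
    [AddCommGroup K'] [Module Rᵐᵒᵖ K'] [AddCommGroup M] [Module R M]
    [AddCommGroup M'] [Module R M'] (μ : K →ₗ[Rᵐᵒᵖ] K') (ν : M →ₗ[R] M') :
    NCTensor R K M →+ NCTensor R K' M' :=
  QuotientAddGroup.map (TensorRels R K M) (TensorRels R K' M')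
    (FreeAbelianGroup.lift fun p : K × M => FreeAbelianGroup.of (μ p.1, ν p.2))
    (by
      refine (AddSubgroup.closure_le _).2 ?_
      rintro x ((⟨k₁, k₂, m, rfl⟩ | ⟨k, m₁, m₂, rfl⟩) | ⟨r, k, m, rfl⟩) <;>
        refine AddSubgroup.mem_comap.2 (AddSubgroup.subset_closure ?_)
      · exact Or.inl <| Or.inl ⟨μ k₁, μ k₂, ν m, by simp [map_add]⟩
      · exact Or.inl <| Or.inr ⟨μ k, ν m₁, ν m₂, by simp [map_add]⟩
      · exact Or.inr ⟨r, μ k, ν m, by simp [map_smul]⟩)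

/-- A left `R`-module `M` is flat if `μ ⊗ M` is injective for every injective
homomorphism `μ` of right `R`-modules. -/
def ModFlat (M : Type u) [AddCommGroup M] [Module R M] : Prop :=
  ∀ (K L : Type u) [AddCommGroup K] [Module Rᵐᵒᵖ K] [AddCommGroup L] [Module Rᵐᵒᵖ L]
    (μ : K →ₗ[Rᵐᵒᵖ] L), Injective μ →
      Injective (tensorCongr R μ (LinearMap.id : M →ₗ[R] M))

/-- A right `R`-module `M` is flat if `M ⊗ μ` is injective for every injective
homomorphism `μ` of left `R`-modules. -/
def ModFlatRight (M : Type u) [AddCommGroup M] [Module Rᵐᵒᵖ M] : Prop :=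
  ∀ (K L : Type u) [AddCommGroup K] [Module R K] [AddCommGroup L] [Module R L]
    (μ : K →ₗ[R] L), Injective μ →
      Injective (tensorCongr R (LinearMap.id : M →ₗ[Rᵐᵒᵖ] M) μ)

/-- A left `R`-module `M` is fp-flat if `μ ⊗ M` is injective for every injective
homomorphism `μ` of finitely presented right `R`-modules. -/
def FpFlat (M : Type u) [AddCommGroup M] [Module R M] : Prop :=
  ∀ (K L : Type u) [AddCommGroup K] [Module Rᵐᵒᵖ K] [AddCommGroup L] [Module Rᵐᵒᵖ L],
    Module.FinitePresentation Rᵐᵒᵖ K → Module.FinitePresentation Rᵐᵒᵖ L →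
    ∀ (μ : K →ₗ[Rᵐᵒᵖ] L), Injective μ →
      Injective (tensorCongr R μ (LinearMap.id : M →ₗ[R] M))

/-- A right `R`-module `M` is fp-flat if `M ⊗ μ` is injective for every injective
homomorphism `μ` of finitely presented left `R`-modules. -/
def FpFlatRight (M : Type u) [AddCommGroup M] [Module Rᵐᵒᵖ M] : Prop :=
  ∀ (K L : Type u) [AddCommGroup K] [Module R K] [AddCommGroup L] [Module R L],
    Module.FinitePresentation R K → Module.FinitePresentation R L →
    ∀ (μ : K →ₗ[R] L), Injective μ →
      Injective (tensorCongr R (LinearMap.id : M →ₗ[Rᵐᵒᵖ] M) μ)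

/-- `Ext¹_R(F, M) = 0`. -/
def ExtVanish (F M : Type u) [AddCommGroup F] [Module R F] [AddCommGroup M] [Module R M] :
    Prop :=
  Subsingleton
    (((Ext ℤ (ModuleCat.{u} R) 1).obj (Opposite.op (ModuleCat.of R F))).obj (ModuleCat.of R M))

/-- A left `R`-module `M` is FP-injective (absolutely pure) if `Ext¹_R(F, M) = 0` for
every finitely presented left `R`-module `F`. -/
def FPInjective (M : Type u) [AddCommGroup M] [Module R M] : Prop :=
  ∀ (F : Type u) [AddCommGroup F] [Module R F], Module.FinitePresentation R F → ExtVanish R F M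

/-- A left `R`-module `M` is fp-injective if for every injective homomorphism `μ : K → L`
of finitely presented left `R`-modules, the induced map `Hom(L, M) → Hom(K, M)` is
surjective. -/
def FpInjective (M : Type u) [AddCommGroup M] [Module R M] : Prop :=
  ∀ (K L : Type u) [AddCommGroup K] [Module R K] [AddCommGroup L] [Module R L],
    Module.FinitePresentation R K → Module.FinitePresentation R L →
    ∀ (μ : K →ₗ[R] L), Injective μ → ∀ f : K →ₗ[R] M, ∃ g : L →ₗ[R] M, g ∘ₗ μ = f

/-- A left `R`-module `K` is an FP-cogenerator if for every nonzero homomorphism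
`f : M → N` from a finitely generated module `M` to a finitely presented module `N`
there is `g : N → K` with `g ∘ f ≠ 0`. -/
def IsFPCogenerator (K : Type u) [AddCommGroup K] [Module R K] : Prop :=
  ∀ (M N : Type u) [AddCommGroup M] [Module R M] [AddCommGroup N] [Module R N],
    Module.Finite R M → Module.FinitePresentation R N →
    ∀ f : M →ₗ[R] N, f ≠ 0 → ∃ g : N →ₗ[R] K, g ∘ₗ f ≠ 0

/-- A left `R`-module `K` is a cogenerator if for every nonzero homomorphism `f : M → N`
of left `R`-modules there is `g : N → K` with `g ∘ f ≠ 0`. -/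
def IsCogenerator (K : Type u) [AddCommGroup K] [Module R K] : Prop :=
  ∀ (M N : Type u) [AddCommGroup M] [Module R M] [AddCommGroup N] [Module R N],
    ∀ f : M →ₗ[R] N, f ≠ 0 → ∃ g : N →ₗ[R] K, g ∘ₗ f ≠ 0

/-- The canonical evaluation map `M → M** = Hom(Hom(M, R), R)` for a left `R`-module `M`;
here `M* = Hom_R(M, R)` is a right `R`-module. -/
def dualEval (M : Type u) [AddCommGroup M] [Module R M] :
    M →ₗ[R] ((M →ₗ[R] R) →ₗ[Rᵐᵒᵖ] R) where
  toFun m :=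
    { toFun := fun f => f m
      map_add' := fun f g => rfl
      map_smul' := fun r f => rfl }
  map_add' m m' := LinearMap.ext fun f => f.map_add m m'
  map_smul' r m := LinearMap.ext fun f => by simp [f.map_smul]

/-- The canonical evaluation map `M → M** = Hom(Hom(M, R), R)` for a right `R`-module `M`;
here `M* = Hom_R(M, R)` is a left `R`-module. -/
def dualEvalRight (M : Type u) [AddCommGroup M] [Module Rᵐᵒᵖ M] :
    M →ₗ[Rᵐᵒᵖ] ((M →ₗ[Rᵐᵒᵖ] R) →ₗ[R] R) where
  toFun m :=
    { toFun := fun f => f m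
      map_add' := fun f g => rfl
      map_smul' := fun r f => rfl }
  map_add' m m' := LinearMap.ext fun f => f.map_add m m'
  map_smul' r m := LinearMap.ext fun f => by simp [f.map_smul]

/-- The left annihilator of a subset `X ⊆ R`. -/
def lAnn (X : Set R) : Set R := {a | ∀ x ∈ X, a * x = 0}

/-- The right annihilator of a subset `X ⊆ R`. -/
def rAnn (X : Set R) : Set R := {a | ∀ x ∈ X, x * a = 0}

/-- `R` is left coherent: every finitely generated left ideal is finitely presented. -/
def LeftCoherent : Prop :=
  ∀ I : Submodule R R, I.FG → Module.FinitePresentation R I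

/-- `R` is right coherent: every finitely generated right ideal is finitely presented. -/
def RightCoherent : Prop :=
  ∀ I : Submodule Rᵐᵒᵖ R, I.FG → Module.FinitePresentation Rᵐᵒᵖ I

/-- A left `R`-module `M` embeds in a free left `R`-module. -/
def EmbedsInFree (M : Type u) [AddCommGroup M] [Module R M] : Prop :=
  ∃ (ι : Type u) (f : M →ₗ[R] (ι →₀ R)), Injective f

/-- A right `R`-module `M` embeds in a free right `R`-module. -/
def EmbedsInFreeRight (M : Type u) [AddCommGroup M] [Module Rᵐᵒᵖ M] : Prop :=
  ∃ (ι : Type u) (f : M →ₗ[Rᵐᵒᵖ] (ι →₀ R)), Injective f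

/-- `R` is a left IF-ring: every finitely presented left `R`-module embeds in a free module. -/
def LeftIF : Prop :=
  ∀ (M : Type u) [AddCommGroup M] [Module R M],
    Module.FinitePresentation R M → EmbedsInFree R M

/-- `R` is a right IF-ring: every finitely presented right `R`-module embeds in a free module. -/
def RightIF : Prop :=
  ∀ (M : Type u) [AddCommGroup M] [Module Rᵐᵒᵖ M],
    Module.FinitePresentation Rᵐᵒᵖ M → EmbedsInFreeRight R M

/-- A module is cyclic if it is generated by one element. -/
def CyclicModule (M : Type u) [AddCommGroup M] [Module R M] : Prop :=
  ∃ m : M, Submodule.span R {m} = ⊤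

/-- `R` is a left CF-ring: every cyclic left `R`-module embeds in a free module. -/
def LeftCF : Prop :=
  ∀ (M : Type u) [AddCommGroup M] [Module R M], CyclicModule R M → EmbedsInFree R M

/-- `R` is a left FGF-ring: every finitely generated left `R`-module embeds in a free module. -/
def LeftFGF : Prop :=
  ∀ (M : Type u) [AddCommGroup M] [Module R M], Module.Finite R M → EmbedsInFree R M

/-- `R` is a left Kasch ring: `Hom_R(M, R) ≠ 0` for every nonzero cyclic left `R`-module. -/
def LeftKasch : Prop :=
  ∀ (M : Type u) [AddCommGroup M] [Module R M],
    CyclicModule R M → Nontrivial M → ∃ f : M →ₗ[R] R, f ≠ 0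

/-- `R` is a right Kasch ring: `Hom_R(M, R) ≠ 0` for every nonzero cyclic right `R`-module. -/
def RightKasch : Prop :=
  ∀ (M : Type u) [AddCommGroup M] [Module Rᵐᵒᵖ M],
    CyclicModule Rᵐᵒᵖ M → Nontrivial M → ∃ f : M →ₗ[Rᵐᵒᵖ] R, f ≠ 0

/-- The socle of a module: the sum of all its simple submodules. -/
def socle (M : Type u) [AddCommGroup M] [Module R M] : Submodule R M :=
  sSup {N : Submodule R M | IsSimpleModule R N}

/-- `R` is left semiartinian: every nonzero cyclic left `R`-module has a nonzero socle. -/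
def LeftSemiartinian : Prop :=
  ∀ (M : Type u) [AddCommGroup M] [Module R M],
    CyclicModule R M → Nontrivial M → socle R M ≠ ⊥

/-- A submodule `N ⊆ M` is essential if it meets every nonzero submodule nontrivially. -/
def EssentialSub {M : Type u} [AddCommGroup M] [Module R M] (N : Submodule R M) : Prop :=
  ∀ P : Submodule R M, P ≠ ⊥ → N ⊓ P ≠ ⊥

/-- `R` is semiregular: `R/rad R` is von Neumann regular,
where `rad R` is the Jacobson radical. -/
def Semiregular : Prop :=
  ∀ a : R, ∃ x : R, a - a * x * a ∈ Ideal.jacobson (⊥ : Ideal R)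

/-- `R` is semiperfect: `R/rad R` is semisimple and idempotents lift modulo `rad R`. -/
def Semiperfect : Prop :=
  IsSemisimpleModule R (R ⧸ Ideal.jacobson (⊥ : Ideal R)) ∧
    ∀ a : R, a * a - a ∈ Ideal.jacobson (⊥ : Ideal R) →
      ∃ e : R, e * e = e ∧ e - a ∈ Ideal.jacobson (⊥ : Ideal R)

/-- A module is indecomposable if it is nonzero and is not the direct sum of two
nonzero submodules. -/
def IndecModule (M : Type u) [AddCommGroup M] [Module R M] : Prop :=
  Nontrivial M ∧ ∀ A B : Submodule R M, IsCompl A B → A = ⊥ ∨ B = ⊥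

/-- `R` is weakly quasi-Frobenius: left and right coherent and left and right FP-injective. -/
def WQF : Prop :=
  LeftCoherent R ∧ RightCoherent R ∧ FPInjective R R ∧ FPInjective Rᵐᵒᵖ R

/-- `R` is quasi-Frobenius: left and right noetherian and left and right self-injective. -/
def QF : Prop :=
  IsNoetherianRing R ∧ IsNoetherian Rᵐᵒᵖ R ∧ Module.Injective R R ∧ Module.Injective Rᵐᵒᵖ R

end Defs

/-- A group is locally finite if every finitely generated subgroup is finite. -/
def LocallyFiniteGroup (G : Type*) [Group G] : Prop :=
  ∀ H : Subgroup G, H.FG → Finite H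


section ExtBridge
open CategoryTheory

variable {R : Type u} [Ring R]

/-- Maps from the kernel of `p` to `M` extend. -/
def ExtProp {P F : Type u} [AddCommGroup P] [Module R P] [AddCommGroup F] [Module R F]
    (p : P →ₗ[R] F) (M : Type u) [AddCommGroup M] [Module R M] : Prop :=
  ∀ f : LinearMap.ker p →ₗ[R] M, ∃ g : P →ₗ[R] M, ∀ x : LinearMap.ker p, g x = f x

lemma ExtProp.transfer {P Q F M : Type u} [AddCommGroup P] [Module R P] [AddCommGroup F]
    [Module R F] [AddCommGroup Q] [Module R Q] [AddCommGroup M] [Module R M]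
    [Module.Projective R P] [Module.Projective R Q]
    (p : P →ₗ[R] F) (hp : Surjective p) (q : Q →ₗ[R] F) (hq : Surjective q)
    (h : ExtProp p M) : ExtProp q M := by
  intro f
  obtain ⟨a, ha⟩ := Module.projective_lifting_property q p hq
  obtain ⟨b, hb⟩ := Module.projective_lifting_property p q hp
  have ha' : ∀ x, q (a x) = p x := fun x => LinearMap.congr_fun ha x
  have hb' : ∀ x, p (b x) = q x := fun x => LinearMap.congr_fun hb x
  obtain ⟨g, hg⟩ := h (f ∘ₗ (a ∘ₗ (LinearMap.ker p).subtype).codRestrict (LinearMap.ker q)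
    (fun x => by simp [ha']))
  refine ⟨g ∘ₗ b + f ∘ₗ (LinearMap.id - a ∘ₗ b).codRestrict (LinearMap.ker q)
    (fun x => by simp [ha', hb']), fun x => ?_⟩
  have h1 := hg ⟨b x, by simp [hb']⟩
  simp only [LinearMap.add_apply, LinearMap.comp_apply]
  simp only [LinearMap.comp_apply] at h1
  rw [h1, ← map_add]
  congr 1
  ext
  change a (b x) + ((x : Q) - a (b x)) = x
  abel

set_option maxHeartbeats 1000000 in
lemma extVanish_iff {F M : Type u} [AddCommGroup F] [Module R F] [AddCommGroup M] [Module R M]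
    (Pr : ProjectiveResolution (ModuleCat.of R F)) :
    ExtVanish R F M ↔ ∀ f : Pr.complex.X 1 ⟶ ModuleCat.of R M, Pr.complex.d 2 1 ≫ f = 0 →
      ∃ g : Pr.complex.X 0 ⟶ ModuleCat.of R M, f = Pr.complex.d 1 0 ≫ g := by
  have e := Pr.isoExt (R := ℤ) 1 (ModuleCat.of R M)
  unfold ExtVanish
  rw [e.toLinearEquiv.toEquiv.subsingleton_congr]
  rw [← ModuleCat.isZero_iff_subsingleton, ← HomologicalComplex.exactAt_iff_isZero_homology,
    HomologicalComplex.exactAt_iff' _ 0 1 2 (by simp) (by simp),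
    ShortComplex.moduleCat_exact_iff]
  constructor
  · intro h f hf
    obtain ⟨g, hg⟩ := h f hf
    exact ⟨g, hg.symm⟩
  · intro h f hf
    obtain ⟨g, hg⟩ := h f hf
    exact ⟨g, hg.symm⟩

lemma extVanish_iff_extProp {F M P : Type u} [AddCommGroup F] [Module R F] [AddCommGroup M]
    [Module R M] [AddCommGroup P] [Module R P] [Module.Projective R P]
    (p : P →ₗ[R] F) (hp : Surjective p) : ExtVanish R F M ↔ ExtProp p M := by
  let Pr := projectiveResolution (ModuleCat.of R F)
  let q : Pr.complex.X 0 →ₗ[R] F := (Pr.π.f 0).hom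
  have hq : Surjective q := (ModuleCat.epi_iff_surjective _).1 inferInstance
  have : Module.Projective R (Pr.complex.X 0) :=
    (IsProjective.iff_projective (R := R) (Pr.complex.X 0)).2 (Pr.projective 0)
  let d : Pr.complex.X 1 →ₗ[R] Pr.complex.X 0 := (Pr.complex.d 1 0).hom
  have hex : LinearMap.range d = LinearMap.ker q := by
    have := (ShortComplex.exact_of_g_is_cokernel
      (ShortComplex.mk _ _ Pr.complex_d_comp_π_f_zero) Pr.isColimitCokernelCofork)
    exact this.moduleCat_range_eq_ker
  have hex2 : LinearMap.range (Pr.complex.d 2 1).hom = LinearMap.ker d :=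
    (Pr.exact_succ 0).moduleCat_range_eq_ker
  have key : ExtVanish R F M ↔ ExtProp q M := by
    rw [extVanish_iff Pr]
    constructor
    · intro h f
      let d' : Pr.complex.X 1 →ₗ[R] LinearMap.ker q :=
        d.codRestrict _ (fun x => hex.le ⟨x, rfl⟩)
      obtain ⟨g, hg⟩ := h (ModuleCat.ofHom (f ∘ₗ d')) (by
        ext x
        have : d' ((Pr.complex.d 2 1).hom x) = 0 := by
          have : (Pr.complex.d 2 1).hom x ∈ LinearMap.ker d := hex2.le ⟨x, rfl⟩
          ext
          exact this
        show f (d' ((Pr.complex.d 2 1).hom x)) = 0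
        rw [this, map_zero])
      refine ⟨g.hom, fun x => ?_⟩
      obtain ⟨y, hy⟩ : (x : Pr.complex.X 0) ∈ LinearMap.range d := hex.ge x.2
      have h2 := LinearMap.congr_fun (congrArg ModuleCat.Hom.hom hg) y
      have h3 : d' y = x := Subtype.ext hy
      rw [← h3]
      exact h2.symm
    · intro h f hf
      have hk : LinearMap.ker d ≤ LinearMap.ker f.hom := by
        rw [← hex2]
        rintro _ ⟨x, rfl⟩
        exact LinearMap.congr_fun (congrArg ModuleCat.Hom.hom hf) x
      let f' : LinearMap.range d →ₗ[R] M :=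
        (LinearMap.ker d).liftQ f.hom hk ∘ₗ d.quotKerEquivRange.symm.toLinearMap
      have hf' : ∀ x, f' ⟨d x, ⟨x, rfl⟩⟩ = f.hom x := by
        intro x
        simp only [f', LinearMap.comp_apply, LinearEquiv.coe_coe]
        have := d.quotKerEquivRange_symm_apply_image x ⟨x, rfl⟩
        rw [this]
        simp
      obtain ⟨g, hg⟩ := h (f' ∘ₗ (LinearEquiv.ofEq _ _ hex.symm).toLinearMap)
      refine ⟨ModuleCat.ofHom g, ?_⟩
      ext x
      have := hg ⟨d x, hex.le ⟨x, rfl⟩⟩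
      rw [← hf' x]
      exact this.symm
  rw [key]
  exact ⟨ExtProp.transfer _ hq _ hp, ExtProp.transfer _ hp _ hq⟩

end ExtBridge

section MatConds
open Matrix

variable (R : Type u) [Ring R]

/-- Matrix form of FP-injectivity of a module. -/
def FPIm (M : Type u) [AddCommGroup M] [Module R M] : Prop :=
  ∀ (a b : ℕ) (F : Matrix (Fin a) (Fin b) R) (φ : Fin a → M),
    (∀ x : Fin a → R, x ᵥ* F = 0 → ∑ i, x i • φ i = 0) →
      ∃ ψ : Fin b → M, ∀ i, φ i = ∑ j, F i j • ψ j

/-- Right self-FP-injectivity. -/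
def FPIr : Prop :=
  ∀ (a b : ℕ) (F : Matrix (Fin b) (Fin a) R) (φ : Fin a → R),
    (∀ x : Fin a → R, F *ᵥ x = 0 → φ ⬝ᵥ x = 0) → ∃ ψ : Fin b → R, φ = ψ ᵥ* F

/-- Left self-FP-injectivity. -/
def FPIl : Prop :=
  ∀ (a b : ℕ) (F : Matrix (Fin a) (Fin b) R) (φ : Fin a → R),
    (∀ x : Fin a → R, x ᵥ* F = 0 → x ⬝ᵥ φ = 0) → ∃ ψ : Fin b → R, φ = F *ᵥ ψ

/-- Left IF. -/
def IFl : Prop :=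
  ∀ (m n : ℕ) (F : Matrix (Fin m) (Fin n) R), ∃ (p : ℕ) (G : Matrix (Fin n) (Fin p) R),
    ∀ x : Fin n → R, x ᵥ* G = 0 ↔ ∃ y, x = y ᵥ* F

/-- Right IF. -/
def IFr : Prop :=
  ∀ (m n : ℕ) (F : Matrix (Fin n) (Fin m) R), ∃ (p : ℕ) (G : Matrix (Fin p) (Fin n) R),
    ∀ x : Fin n → R, G *ᵥ x = 0 ↔ ∃ y, x = F *ᵥ y

/-- Left coherence. -/
def Cohl : Prop :=
  ∀ (m n : ℕ) (F : Matrix (Fin m) (Fin n) R), ∃ (p : ℕ) (G : Matrix (Fin p) (Fin m) R),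
    ∀ x : Fin m → R, x ᵥ* F = 0 ↔ ∃ y, x = y ᵥ* G

/-- Right coherence. -/
def Cohr : Prop :=
  ∀ (m n : ℕ) (F : Matrix (Fin n) (Fin m) R), ∃ (p : ℕ) (G : Matrix (Fin m) (Fin p) R),
    ∀ x : Fin m → R, F *ᵥ x = 0 ↔ ∃ y, x = G *ᵥ y

variable {R}

lemma vecMul_eq_zero_of_mul {m n p : ℕ} {F : Matrix (Fin m) (Fin n) R}
    {G : Matrix (Fin n) (Fin p) R} (h : ∀ x : Fin n → R, (∃ y, x = y ᵥ* F) → x ᵥ* G = 0) :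
    F * G = 0 := by
  ext i j
  have := congrFun (h (F i) ⟨Pi.single i 1, by ext; simp⟩) j
  simpa [Matrix.mul_apply, vecMul, dotProduct] using this

lemma mulVec_eq_zero_of_mul {m n p : ℕ} {F : Matrix (Fin m) (Fin n) R}
    {G : Matrix (Fin n) (Fin p) R} (h : ∀ x : Fin n → R, (∃ y, x = G *ᵥ y) → F *ᵥ x = 0) :
    F * G = 0 := by
  ext i j
  have := congrFun (h (fun k => G k j) ⟨Pi.single j 1, by ext; simp⟩) i
  simpa [Matrix.mul_apply, mulVec, dotProduct] using this

lemma FPIr_of_IFl (h : IFl R) : FPIr R := by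
  intro a b F φ hφ
  obtain ⟨p, G, hG⟩ := h _ _ F
  have hFG := vecMul_eq_zero_of_mul (fun x hx => (hG x).2 hx)
  refine (hG φ).1 ?_
  ext k
  refine hφ (fun j => G j k) ?_
  ext i
  exact congrFun (congrFun hFG i) k

lemma Cohr_of_IFl (h : IFl R) (h' : FPIl R) : Cohr R := by
  intro m n F
  obtain ⟨p, G, hG⟩ := h _ _ F
  have hFG := vecMul_eq_zero_of_mul (fun x hx => (hG x).2 hx)
  refine ⟨p, G, fun x => ⟨fun hx => ?_, ?_⟩⟩
  · refine h' _ _ G x fun z hz => ?_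
    obtain ⟨y, rfl⟩ := (hG z).1 hz
    rw [← dotProduct_mulVec, hx, dotProduct_zero]
  · rintro ⟨y, rfl⟩
    rw [mulVec_mulVec, hFG, zero_mulVec]

lemma IFl_of_Cohr (h : Cohr R) (h' : FPIr R) : IFl R := by
  intro m n F
  obtain ⟨p, G, hG⟩ := h _ _ F
  have hFG := mulVec_eq_zero_of_mul (fun x hx => (hG x).2 hx)
  refine ⟨p, G, fun x => ⟨fun hx => ?_, ?_⟩⟩
  · refine h' _ _ F x fun z hz => ?_
    obtain ⟨y, rfl⟩ := (hG z).1 hz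
    rw [dotProduct_mulVec, hx, zero_dotProduct]
  · rintro ⟨y, rfl⟩
    rw [vecMul_vecMul, hFG, vecMul_zero]

/-- Transposed opposite. -/
def mop {m n : ℕ} (F : Matrix (Fin m) (Fin n) R) : Matrix (Fin n) (Fin m) Rᵐᵒᵖ :=
  fun j i => op (F i j)

/-- Transposed unopposite. -/
def munop {m n : ℕ} (F : Matrix (Fin m) (Fin n) Rᵐᵒᵖ) : Matrix (Fin n) (Fin m) R :=
  fun j i => unop (F i j)

/-- Opposite vector. -/
def vop {n : ℕ} (x : Fin n → R) : Fin n → Rᵐᵒᵖ := fun i => op (x i)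

/-- Unopposite vector. -/
def vunop {n : ℕ} (x : Fin n → Rᵐᵒᵖ) : Fin n → R := fun i => unop (x i)

@[simp] lemma mop_munop {m n : ℕ} (F : Matrix (Fin m) (Fin n) Rᵐᵒᵖ) : mop (munop F) = F := rfl
@[simp] lemma munop_mop {m n : ℕ} (F : Matrix (Fin m) (Fin n) R) : munop (mop F) = F := rfl
@[simp] lemma vop_vunop {n : ℕ} (F : Fin n → Rᵐᵒᵖ) : vop (vunop F) = F := rfl
@[simp] lemma vunop_vop {n : ℕ} (F : Fin n → R) : vunop (vop F) = F := rfl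

lemma vop_inj {n : ℕ} {x y : Fin n → R} : vop x = vop y ↔ x = y :=
  ⟨fun h => by rw [← vunop_vop x, h, vunop_vop], fun h => h ▸ rfl⟩

@[simp] lemma vop_eq_zero {n : ℕ} {x : Fin n → R} : vop x = 0 ↔ x = 0 :=
  vop_inj (y := 0)

lemma dot_vop {n : ℕ} (x y : Fin n → R) : vop x ⬝ᵥ vop y = op (y ⬝ᵥ x) := by
  simp [vop, dotProduct]

lemma vecMul_mop {m n : ℕ} (F : Matrix (Fin m) (Fin n) R) (x : Fin n → R) :
    vop x ᵥ* mop F = vop (F *ᵥ x) := by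
  ext i
  exact dot_vop x (F i)

lemma mulVec_mop {m n : ℕ} (F : Matrix (Fin m) (Fin n) R) (x : Fin m → R) :
    mop F *ᵥ vop x = vop (x ᵥ* F) := by
  ext i
  exact dot_vop (fun j => F j i) x

lemma exists_vop {n : ℕ} {p : (Fin n → Rᵐᵒᵖ) → Prop} : (∃ x, p x) ↔ ∃ x, p (vop x) :=
  ⟨fun ⟨x, h⟩ => ⟨vunop x, h⟩, fun ⟨x, h⟩ => ⟨_, h⟩⟩
lemma forall_vop {n : ℕ} {p : (Fin n → Rᵐᵒᵖ) → Prop} : (∀ x, p x) ↔ ∀ x, p (vop x) :=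
  ⟨fun h x => h _, fun h x => h (vunop x)⟩
lemma exists_mop {m n : ℕ} {p : (Matrix (Fin n) (Fin m) Rᵐᵒᵖ) → Prop} :
    (∃ x, p x) ↔ ∃ x, p (mop x) :=
  ⟨fun ⟨x, h⟩ => ⟨munop x, h⟩, fun ⟨x, h⟩ => ⟨_, h⟩⟩
lemma forall_mop {m n : ℕ} {p : (Matrix (Fin n) (Fin m) Rᵐᵒᵖ) → Prop} :
    (∀ x, p x) ↔ ∀ x, p (mop x) :=
  ⟨fun h x => h _, fun h x => h (munop x)⟩

lemma FPIl_op : FPIl Rᵐᵒᵖ ↔ FPIr R := by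
  simp only [FPIl, FPIr, exists_vop, forall_vop, forall_mop, vecMul_mop, mulVec_mop, dot_vop,
    vop_inj, vop_eq_zero, op_eq_zero_iff]
lemma FPIr_op : FPIr Rᵐᵒᵖ ↔ FPIl R := by
  simp only [FPIl, FPIr, exists_vop, forall_vop, forall_mop, vecMul_mop, mulVec_mop, dot_vop,
    vop_inj, vop_eq_zero, op_eq_zero_iff]
lemma IFl_op : IFl Rᵐᵒᵖ ↔ IFr R := by
  simp only [IFl, IFr, exists_vop, forall_vop, forall_mop, vecMul_mop, mulVec_mop, exists_mop,
    vop_inj, vop_eq_zero]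
lemma IFr_op : IFr Rᵐᵒᵖ ↔ IFl R := by
  simp only [IFl, IFr, exists_vop, forall_vop, forall_mop, vecMul_mop, mulVec_mop, exists_mop,
    vop_inj, vop_eq_zero]
lemma Cohl_op : Cohl Rᵐᵒᵖ ↔ Cohr R := by
  simp only [Cohl, Cohr, exists_vop, forall_vop, forall_mop, vecMul_mop, mulVec_mop, exists_mop,
    vop_inj, vop_eq_zero]
lemma Cohr_op : Cohr Rᵐᵒᵖ ↔ Cohl R := by
  simp only [Cohl, Cohr, exists_vop, forall_vop, forall_mop, vecMul_mop, mulVec_mop, exists_mop,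
    vop_inj, vop_eq_zero]

lemma FPIl_of_IFr (h : IFr R) : FPIl R := FPIr_op.1 (FPIr_of_IFl (IFl_op.2 h))
lemma Cohl_of_IFr (h : IFr R) (h' : FPIr R) : Cohl R :=
  Cohr_op.1 (Cohr_of_IFl (IFl_op.2 h) (FPIl_op.2 h'))
lemma IFr_of_Cohl (h : Cohl R) (h' : FPIl R) : IFr R :=
  IFl_op.1 (IFl_of_Cohr (Cohr_op.2 h) (FPIr_op.2 h'))

lemma FPIl_iff : FPIl R ↔ FPIm R R := by
  simp only [FPIl, FPIm, funext_iff, mulVec, dotProduct, smul_eq_mul]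

end MatConds

section Conv
open Matrix

variable {R : Type u} [Ring R]

/-- Combination map of a finite family. -/
def comb {M : Type u} [AddCommGroup M] [Module R M] {n : ℕ} (v : Fin n → M) :
    (Fin n → R) →ₗ[R] M := Fintype.linearCombination R v

lemma comb_apply {M : Type u} [AddCommGroup M] [Module R M] {n : ℕ} (v : Fin n → M)
    (x : Fin n → R) : comb v x = ∑ i, x i • v i := rfl

lemma range_comb {M : Type u} [AddCommGroup M] [Module R M] {n : ℕ} (v : Fin n → M) :
    LinearMap.range (comb (R := R) v) = Submodule.span R (Set.range v) :=
  Fintype.range_linearCombination R v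

lemma eq_comb {M : Type u} [AddCommGroup M] [Module R M] {n : ℕ} (f : (Fin n → R) →ₗ[R] M) :
    f = comb (fun i => f (Pi.single i 1)) := by
  refine LinearMap.pi_ext' fun i => LinearMap.ext_ring ?_
  simp [comb_apply, Pi.single_apply]

/-- Linear map of a matrix acting on row vectors. -/
def cm {m n : ℕ} (F : Matrix (Fin m) (Fin n) R) : (Fin m → R) →ₗ[R] (Fin n → R) :=
  comb (M := Fin n → R) (fun i j => F i j)

lemma cm_apply {m n : ℕ} (F : Matrix (Fin m) (Fin n) R) (x : Fin m → R) (j : Fin n) :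
    cm F x j = ∑ i, x i * F i j := by
  simp [cm, comb_apply]

lemma vecMul_eq_comb {m n : ℕ} (F : Matrix (Fin m) (Fin n) R) (x : Fin m → R) :
    x ᵥ* F = cm F x := by
  ext j
  simp [cm_apply, vecMul, dotProduct]

lemma eq_cm {m n : ℕ} (g : (Fin m → R) →ₗ[R] (Fin n → R)) :
    g = cm (Matrix.of fun i => g (Pi.single i 1)) := eq_comb g

lemma fg_mat {n : ℕ} {N : Submodule R (Fin n → R)} (h : N.FG) :
    ∃ (a : ℕ) (F : Matrix (Fin a) (Fin n) R), LinearMap.range (cm F) = N := by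
  obtain ⟨a, v, hv⟩ := Submodule.fg_iff_exists_fin_generating_family.1 h
  exact ⟨a, Matrix.of v, by rw [← hv]; exact range_comb v⟩

lemma fp_pres {M : Type u} [AddCommGroup M] [Module R M] [h : Module.FinitePresentation R M] :
    ∃ (n : ℕ) (f : (Fin n → R) →ₗ[R] M), Surjective f ∧ (LinearMap.ker f).FG := by
  obtain ⟨n, f, hf⟩ := Module.Finite.exists_fin' R M
  exact ⟨n, f, hf, Module.FinitePresentation.fg_ker f hf⟩

lemma fp_range_quot {n : ℕ} {N : Submodule R (Fin n → R)} (h : N.FG) :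
    Module.FinitePresentation R ((Fin n → R) ⧸ N) :=
  Module.finitePresentation_of_surjective N.mkQ N.mkQ_surjective (by simpa using h)

lemma factor_range {X Y M : Type u} [AddCommGroup X] [Module R X] [AddCommGroup Y] [Module R Y]
    [AddCommGroup M] [Module R M] (f : X →ₗ[R] Y) (φ : X →ₗ[R] M)
    (h : LinearMap.ker f ≤ LinearMap.ker φ) :
    ∃ g : LinearMap.range f →ₗ[R] M, ∀ x, g ⟨f x, ⟨x, rfl⟩⟩ = φ x := by
  refine ⟨(LinearMap.ker f).liftQ φ h ∘ₗ f.quotKerEquivRange.symm.toLinearMap, fun x => ?_⟩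
  simp only [LinearMap.comp_apply, LinearEquiv.coe_coe]
  have := f.quotKerEquivRange_symm_apply_image x ⟨x, rfl⟩
  rw [this]
  simp

lemma FPInjective.extend {M : Type u} [AddCommGroup M] [Module R M] (h : FPInjective R M)
    {X : Type u} [AddCommGroup X] [Module R X] [Module.Finite R X] {b : ℕ}
    (f : X →ₗ[R] (Fin b → R)) (φ : X →ₗ[R] M) (hk : LinearMap.ker f ≤ LinearMap.ker φ) :
    ∃ ψ : (Fin b → R) →ₗ[R] M, ∀ x, ψ (f x) = φ x := by
  have hN : (LinearMap.range f).FG := by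
    rw [LinearMap.range_eq_map]; exact Module.Finite.fg_top.map f
  have h1 := (extVanish_iff_extProp (LinearMap.range f).mkQ
    (LinearMap.range f).mkQ_surjective).1 (h _ (fp_range_quot hN))
  obtain ⟨g, hg⟩ := factor_range f φ hk
  obtain ⟨ψ, hψ⟩ := h1 (g ∘ₗ (LinearEquiv.ofEq _ _ (Submodule.ker_mkQ _)).toLinearMap)
  refine ⟨ψ, fun x => ?_⟩
  rw [← hg x]
  exact hψ ⟨f x, by simp⟩

lemma FPInjective_iff {M : Type u} [AddCommGroup M] [Module R M] :
    FPInjective R M ↔ FPIm R M := by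
  constructor
  · intro h a b F φ hφ
    obtain ⟨ψ, hψ⟩ := h.extend (cm F) (comb φ) (fun x hx => by
      refine hφ x ?_
      rw [vecMul_eq_comb]; exact hx)
    refine ⟨fun j => ψ (Pi.single j 1), fun i => ?_⟩
    have := hψ (Pi.single i 1)
    rw [eq_comb ψ] at this
    simpa [comb_apply, cm_apply, Pi.single_apply] using this.symm
  · intro h F _ _ hF
    obtain ⟨n, f, hf, hfg⟩ := fp_pres (R := R) (M := F)
    rw [extVanish_iff_extProp f hf]
    obtain ⟨a, F, hF⟩ := fg_mat hfg
    intro g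
    let v : Fin a → LinearMap.ker f := fun i => ⟨F i, hF.le ⟨Pi.single i 1, by
      ext; simp [cm_apply, Pi.single_apply]⟩⟩
    obtain ⟨ψ, hψ⟩ := h a n F (fun i => g (v i)) (fun x hx => by
      simp only [← map_smul, ← map_sum]
      convert map_zero g
      ext j
      rw [vecMul_eq_comb] at hx
      have := congrFun hx j
      simpa [cm_apply, v] using this)
    refine ⟨comb ψ, fun x => ?_⟩
    obtain ⟨y, hy⟩ := hF.ge x.2
    have hx : x = ∑ i, y i • v i := by
      ext1
      rw [← hy]
      ext j
      simp [cm_apply, v]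
    rw [hx, map_sum]
    simp only [map_smul, hψ]
    simp only [AddSubmonoidClass.coe_finsetSum, map_sum, Submodule.coe_smul, map_smul]
    rfl

lemma finite_embed {X ι : Type u} [AddCommGroup X] [Module R X] [Module.Finite R X]
    (g : X →ₗ[R] (ι →₀ R)) :
    ∃ (p : ℕ) (g' : X →ₗ[R] (Fin p → R)), LinearMap.ker g' = LinearMap.ker g := by
  classical
  obtain ⟨s, hs⟩ := Module.Finite.fg_top (R := R) (M := X)
  let S : Finset ι := s.biUnion fun x => (g x).support
  have hS : ∀ x, g x ∈ Finsupp.supported R R (S : Set ι) := by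
    intro x
    have : (⊤ : Submodule R X) ≤ (Finsupp.supported R R (S : Set ι)).comap g := by
      rw [← hs, Submodule.span_le]
      intro x hx
      simp only [Submodule.comap_coe, Set.mem_preimage, SetLike.mem_coe, Finsupp.mem_supported]
      intro i hi
      exact Finset.mem_coe.2 (Finset.mem_biUnion.2 ⟨x, hx, hi⟩)
    exact this trivial
  refine ⟨S.card, LinearMap.pi fun k => Finsupp.lapply (S.equivFin.symm k : ι) ∘ₗ g, ?_⟩
  ext x
  simp only [LinearMap.mem_ker]
  constructor
  · intro h
    ext i
    by_cases hi : i ∈ S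
    · have := congrFun h (S.equivFin ⟨i, hi⟩)
      simpa using this
    · by_contra hne
      exact hi (hS x (Finsupp.mem_support_iff.2 hne))
  · intro h
    ext k
    simp [h]

lemma LeftIF_iff : LeftIF R ↔ IFl R := by
  constructor
  · intro h m n F
    have hN : (LinearMap.range (cm F)).FG := by
      rw [LinearMap.range_eq_map]; exact Module.Finite.fg_top.map _
    obtain ⟨ι, j, hj⟩ := h _ (fp_range_quot hN)
    obtain ⟨p, g, hg⟩ := finite_embed (j ∘ₗ Submodule.mkQ (LinearMap.range (cm F)))
    rw [eq_cm g] at hg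
    refine ⟨p, Matrix.of fun i => g (Pi.single i 1), fun x => ?_⟩
    rw [vecMul_eq_comb]
    refine (SetLike.ext_iff.1 hg x).trans ?_
    rw [LinearMap.mem_ker, LinearMap.comp_apply, map_eq_zero_iff j hj, Submodule.mkQ_apply,
      Submodule.Quotient.mk_eq_zero]
    simp only [vecMul_eq_comb, LinearMap.mem_range, eq_comm]
  · intro h M _ _ hM
    obtain ⟨n, f, hf, hfg⟩ := fp_pres (R := R) (M := M)
    obtain ⟨a, F, hF⟩ := fg_mat hfg
    obtain ⟨p, G, hG⟩ := h _ _ F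
    simp only [vecMul_eq_comb] at hG
    obtain ⟨g, hg⟩ := factor_range f (cm G) (fun x hx => by
      obtain ⟨y, hy⟩ := hF.ge hx
      exact (hG x).2 ⟨y, hy.symm⟩)
    refine ⟨ULift (Fin p), (Finsupp.linearEquivFunOnFinite R R (ULift (Fin p))).symm.toLinearMap ∘ₗ
      (LinearEquiv.funCongrLeft R R Equiv.ulift).toLinearMap ∘ₗ g ∘ₗ
      LinearMap.id.codRestrict (LinearMap.range f) (fun x => hf x), ?_⟩
    simp only [LinearMap.coe_comp, LinearEquiv.coe_coe]
    refine (LinearEquiv.injective _).comp ((LinearEquiv.injective _).comp ?_)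
    rw [← LinearMap.coe_comp, ← LinearMap.ker_eq_bot, LinearMap.ker_eq_bot']
    intro m hm
    obtain ⟨x, rfl⟩ := hf m
    have h1 := (hg x).symm.trans hm
    obtain ⟨y, hy⟩ := (hG x).1 h1
    have : x ∈ LinearMap.ker f := hF.le ⟨y, hy.symm⟩
    exact this

lemma coh_inj (h : LeftCoherent R) : ∀ (n : ℕ) (X : Type u) [AddCommGroup X] [Module R X]
    [Module.Finite R X] (j : X →ₗ[R] (Fin n → R)), Injective j →
    Module.FinitePresentation R X := by
  intro n
  induction n with
  | zero =>
    intro X _ _ _ j hj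
    have : Subsingleton X := hj.subsingleton
    exact Module.finitePresentation_of_projective R X
  | succ n ih =>
    intro X _ _ _ j hj
    let l : X →ₗ[R] R := LinearMap.proj 0 ∘ₗ j
    have hI : (LinearMap.range l).FG := by
      rw [LinearMap.range_eq_map]; exact Module.Finite.fg_top.map _
    have hIp := h _ hI
    have hk := Module.FinitePresentation.fg_ker l.rangeRestrict l.surjective_rangeRestrict
    rw [LinearMap.ker_rangeRestrict] at hk
    have : Module.Finite R (LinearMap.ker l) := Module.Finite.iff_fg.2 hk
    have : Module.FinitePresentation R (LinearMap.ker l) := by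
      refine ih _ (LinearMap.funLeft R R Fin.succ ∘ₗ j ∘ₗ (LinearMap.ker l).subtype) ?_
      rw [← LinearMap.ker_eq_bot, LinearMap.ker_eq_bot']
      intro x hx
      have h0 : l x = 0 := x.2
      ext1
      apply hj
      rw [Submodule.coe_zero, map_zero]
      ext i
      refine Fin.cases ?_ (fun i => ?_) i
      · exact h0
      · exact congrFun hx i
    have : Module.FinitePresentation R (LinearMap.ker l.rangeRestrict) := by
      rw [LinearMap.ker_rangeRestrict]; exact this
    exact Module.finitePresentation_of_ker l.rangeRestrict l.surjective_rangeRestrict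

lemma coh_fin (h : LeftCoherent R) (n : ℕ) (N : Submodule R (Fin n → R)) (hN : N.FG) :
    Module.FinitePresentation R N := by
  have : Module.Finite R N := Module.Finite.iff_fg.2 hN
  exact coh_inj h n N N.subtype N.injective_subtype

lemma coh_ker (h : LeftCoherent R) {X : Type u} [AddCommGroup X] [Module R X] [Module.Finite R X]
    {n : ℕ} (f : X →ₗ[R] (Fin n → R)) : (LinearMap.ker f).FG := by
  have hI : (LinearMap.range f).FG := by
    rw [LinearMap.range_eq_map]; exact Module.Finite.fg_top.map _
  have := coh_fin h n _ hI
  have := Module.FinitePresentation.fg_ker f.rangeRestrict f.surjective_rangeRestrict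
  rwa [LinearMap.ker_rangeRestrict] at this

lemma LeftCoherent_iff : LeftCoherent R ↔ Cohl R := by
  constructor
  · intro h m n F
    obtain ⟨p, G, hG⟩ := fg_mat (coh_ker h (cm F))
    refine ⟨p, G, fun x => ?_⟩
    rw [vecMul_eq_comb]
    refine (SetLike.ext_iff.1 hG.symm x).trans ?_
    simp only [vecMul_eq_comb, LinearMap.mem_range, eq_comm]
  · intro h I hI
    obtain ⟨a, v, hv⟩ := Submodule.fg_iff_exists_fin_generating_family.1 hI
    rw [← range_comb] at hv
    subst hv
    obtain ⟨p, G, hG⟩ := h _ _ (fun i (_ : Fin 1) => v i)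
    have : LinearMap.ker (comb (R := R) v) = LinearMap.range (cm G) := by
      ext x
      rw [LinearMap.mem_range]
      refine Iff.trans ?_ ((hG x).trans ?_)
      · simp [comb_apply, funext_iff, vecMul, dotProduct]
      · simp only [vecMul_eq_comb, eq_comm]
    refine Module.finitePresentation_of_surjective (comb (R := R) v).rangeRestrict
      (LinearMap.surjective_rangeRestrict _) ?_
    rw [LinearMap.ker_rangeRestrict, this, LinearMap.range_eq_map]
    exact Module.Finite.fg_top.map _

lemma step_three (h1 : LeftCoherent R) (h2 : FPInjective R R)
    (h3 : ∀ (M : Type u) [AddCommGroup M] [Module R M],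
      Module.FinitePresentation R M → CyclicModule R M → EmbedsInFree R M) :
    ∀ (n : ℕ) (N : Submodule R (Fin n → R)), N.FG →
      ∃ (κ : Type) (_ : Finite κ) (g : (Fin n → R) →ₗ[R] (κ → R)), LinearMap.ker g = N := by
  intro n
  induction n with
  | zero =>
    intro N hN
    exact ⟨Fin 0, inferInstance, 0, Subsingleton.elim _ _⟩
  | succ n ih =>
    intro N hN
    have hfin : Module.Finite R N := Module.Finite.iff_fg.2 hN
    let tl : (Fin (n+1) → R) →ₗ[R] (Fin n → R) := LinearMap.funLeft R R Fin.succ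
    let e0 : R →ₗ[R] (Fin (n+1) → R) := LinearMap.single R (fun _ => R) 0
    have hdec : ∀ x y, tl x = tl y → x = y + e0 (x 0 - y 0) := by
      intro x y hxy
      ext i
      refine Fin.cases ?_ (fun i => ?_) i
      · simp [e0]
      · have : x i.succ = y i.succ := congrFun hxy i
        simp [e0, this]
    obtain ⟨κ, _, g', hg'⟩ := ih (N.map tl) (hN.map tl)
    let I : Submodule R R := N.comap e0
    have hI : I.FG := by
      have hk := coh_ker h1 (tl ∘ₗ N.subtype)
      have : I = (LinearMap.ker (tl ∘ₗ N.subtype)).map (LinearMap.proj 0 ∘ₗ N.subtype) := by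
        ext a
        simp only [Submodule.mem_map, LinearMap.mem_ker, I, Submodule.mem_comap]
        constructor
        · intro ha
          refine ⟨⟨e0 a, ha⟩, ?_, ?_⟩
          · ext i
            simp [tl, e0, LinearMap.funLeft]
          · simp [e0]
        · rintro ⟨x, hx, rfl⟩
          have := hdec x 0 (by simpa using hx)
          simp only [zero_add, Pi.zero_apply, sub_zero] at this
          simp only [LinearMap.comp_apply, LinearMap.proj_apply, Submodule.subtype_apply]
          rw [← this]
          exact x.2
      rw [this]
      exact hk.map _
    have hfp : Module.FinitePresentation R (R ⧸ I) :=
      Module.finitePresentation_of_surjective I.mkQ I.mkQ_surjective (by simpa using hI)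
    obtain ⟨ι, j, hj⟩ := h3 (R ⧸ I) hfp ⟨I.mkQ 1, by
      rw [← Set.image_singleton, ← Submodule.map_span, Ideal.submodule_span_eq,
        Ideal.span_singleton_one, Submodule.map_top, Submodule.range_mkQ]⟩
    obtain ⟨p, g0, hg0⟩ := finite_embed (j ∘ₗ I.mkQ)
    have hg0 : LinearMap.ker g0 = I := by
      rw [hg0, LinearMap.ker_comp, LinearMap.ker_eq_bot.2 hj]
      simp
    let Fm : (R × N) →ₗ[R] (Fin (n+1) → R) := e0.coprod N.subtype
    have hext : ∀ k : Fin p, ∃ ψ : (Fin (n+1) → R) →ₗ[R] R, ∀ x, ψ (Fm x) =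
        (LinearMap.proj k ∘ₗ g0 ∘ₗ LinearMap.fst R R N) x := by
      intro k
      refine h2.extend Fm _ ?_
      rintro ⟨a, x⟩ hx
      have hx : e0 a + (x : Fin (n+1) → R) = 0 := by simpa [Fm] using hx
      have : a ∈ I := by
        show e0 a ∈ N
        rw [eq_neg_of_add_eq_zero_left hx]
        exact N.neg_mem x.2
      rw [← hg0, LinearMap.mem_ker] at this
      simp [this]
    choose ψ hψ using hext
    have hψ1 : ∀ k a, ψ k (e0 a) = g0 a k := fun k a => by
      have := hψ k (a, 0)
      simpa [Fm] using this
    have hψ2 : ∀ k, ∀ x ∈ N, ψ k x = 0 := fun k x hx => by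
      have := hψ k (0, ⟨x, hx⟩)
      simpa [Fm] using this
    refine ⟨Fin p ⊕ κ, inferInstance, LinearMap.pi
      (Sum.elim ψ (fun k => LinearMap.proj k ∘ₗ g' ∘ₗ tl)), ?_⟩
    ext x
    rw [LinearMap.mem_ker]
    constructor
    · intro hx
      have hx1 : ∀ k, ψ k x = 0 := fun k => congrFun hx (Sum.inl k)
      have hx2 : tl x ∈ LinearMap.ker g' := by
        ext k
        exact congrFun hx (Sum.inr k)
      rw [hg'] at hx2
      obtain ⟨y, hy, hyx⟩ := hx2
      have hxy := hdec x y hyx.symm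
      have : x 0 - y 0 ∈ I := by
        rw [← hg0]
        ext k
        have := hx1 k
        rw [hxy, map_add, hψ2 k y hy, hψ1, zero_add] at this
        exact this
      rw [hxy]
      exact N.add_mem hy this
    · intro hx
      have : tl x ∈ LinearMap.ker g' := hg' ▸ ⟨x, hx, rfl⟩
      rw [LinearMap.mem_ker] at this
      ext k
      rcases k with k | k
      · exact hψ2 k x hx
      · exact congrFun this k

lemma IFl_of_three (h1 : LeftCoherent R) (h2 : FPInjective R R)
    (h3 : ∀ (M : Type u) [AddCommGroup M] [Module R M],
      Module.FinitePresentation R M → CyclicModule R M → EmbedsInFree R M) : IFl R := by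
  intro m n F
  have hN : (LinearMap.range (cm F)).FG := by
    rw [LinearMap.range_eq_map]; exact Module.Finite.fg_top.map _
  obtain ⟨κ, _, g, hg⟩ := step_three h1 h2 h3 n _ hN
  obtain ⟨p, ⟨e⟩⟩ := Finite.exists_equiv_fin κ
  let g' : (Fin n → R) →ₗ[R] (Fin p → R) := (LinearEquiv.funCongrLeft R R e.symm).toLinearMap ∘ₗ g
  have hg' : LinearMap.ker g' = LinearMap.range (cm F) := by
    rw [← hg]; exact LinearEquiv.ker_comp _ _
  rw [eq_cm g'] at hg'
  refine ⟨p, Matrix.of fun i => g' (Pi.single i 1), fun x => ?_⟩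
  rw [vecMul_eq_comb]
  refine (SetLike.ext_iff.1 hg' x).trans ?_
  simp only [vecMul_eq_comb, LinearMap.mem_range, eq_comm]

end Conv

section FlatPart
open Matrix

variable {R : Type u} [Ring R]

/-- Finite families of relations in `M` come from factorizations through free modules. -/
def Fac (R : Type u) [Ring R] (M : Type u) [AddCommGroup M] [Module R M] : Prop :=
  ∀ (m n : ℕ) (F : Matrix (Fin m) (Fin n) R) (φ : Fin n → M), (∀ i, ∑ j, F i j • φ j = 0) →
    ∃ (p : ℕ) (G : Matrix (Fin n) (Fin p) R) (ψ : Fin p → M),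
      F * G = 0 ∧ ∀ j, φ j = ∑ k, G j k • ψ k

lemma sum_vecMul_smul {M : Type u} [AddCommGroup M] [Module R M] {m n : ℕ}
    (F : Matrix (Fin m) (Fin n) R) (x : Fin m → R) (φ : Fin n → M) :
    ∑ j, (x ᵥ* F) j • φ j = ∑ i, x i • ∑ j, F i j • φ j := by
  simp only [vecMul, dotProduct, Finset.sum_smul, Finset.smul_sum, mul_smul]
  exact Finset.sum_comm

lemma Fac_of {M : Type u} [AddCommGroup M] [Module R M] (h : IFl R) (h' : FPIm R M) : Fac R M := by
  intro m n F φ hφ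
  obtain ⟨p, G, hG⟩ := h _ _ F
  obtain ⟨ψ, hψ⟩ := h' _ _ G φ (fun x hx => by
    obtain ⟨y, rfl⟩ := (hG x).1 hx
    rw [sum_vecMul_smul]
    simp [hφ])
  exact ⟨p, G, ψ, vecMul_eq_zero_of_mul (fun x hx => (hG x).2 hx), hψ⟩

lemma exists_injective_hull (M : Type u) [AddCommGroup M] [Module R M] :
    ∃ (E : Type u) (_ : AddCommGroup E) (_ : Module R E) (_ : Module.Injective R E)
      (j : M →ₗ[R] E), Injective j := by
  let J := CategoryTheory.Injective.under (ModuleCat.of R M)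
  have hJ : CategoryTheory.Injective J := CategoryTheory.Injective.injective_under _
  refine ⟨J, inferInstance, inferInstance,
    Module.injective_module_of_injective_object (inj := hJ) R J,
    (CategoryTheory.Injective.ι (ModuleCat.of R M)).hom, ?_⟩
  exact (ModuleCat.mono_iff_injective _).1 inferInstance

lemma IFl_of_Fac (h : ∀ (M : Type u) [AddCommGroup M] [Module R M], Module.Injective R M →
    Fac R M) : IFl R := by
  intro m n F
  obtain ⟨E, _, _, hE, j, hj⟩ := exists_injective_hull (R := R)
    ((Fin n → R) ⧸ LinearMap.range (cm F))
  let q := j ∘ₗ (LinearMap.range (cm F)).mkQ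
  have hq : ∀ x, q x = 0 ↔ ∃ y, x = y ᵥ* F := by
    intro x
    rw [LinearMap.comp_apply, map_eq_zero_iff j hj, Submodule.mkQ_apply,
      Submodule.Quotient.mk_eq_zero]
    simp only [vecMul_eq_comb, LinearMap.mem_range, eq_comm]
  have hc : ∀ x, q x = ∑ i, x i • q (Pi.single i 1) := fun x =>
    LinearMap.congr_fun (eq_comb q) x
  obtain ⟨p, G, ψ, hFG, hψ⟩ := h E hE m n F (fun i => q (Pi.single i 1)) (fun i => by
    rw [← hc, hq]
    exact ⟨Pi.single i 1, by ext; simp⟩)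
  refine ⟨p, G, fun x => ⟨fun hx => ?_, ?_⟩⟩
  · rw [← hq, hc]
    simp only [hψ]
    rw [← sum_vecMul_smul, hx]
    simp
  · rintro ⟨y, rfl⟩
    rw [vecMul_vecMul, hFG, vecMul_zero]

/-! Basic API of the tensor product. -/

section Tens
variable {K L M Q : Type u} [AddCommGroup K] [Module Rᵐᵒᵖ K] [AddCommGroup L] [Module Rᵐᵒᵖ L]
  [AddCommGroup M] [Module R M] [AddCommGroup Q]

/-- Pure tensors. -/
def tm (R : Type u) [Ring R] {K M : Type u} [AddCommGroup K] [Module Rᵐᵒᵖ K]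
    [AddCommGroup M] [Module R M] (k : K) (m : M) : NCTensor R K M :=
  QuotientAddGroup.mk (FreeAbelianGroup.of (k, m))

lemma tm_rel {x y : FreeAbelianGroup (K × M)} (h : x - y ∈ TensorRels R K M) :
    (QuotientAddGroup.mk x : FreeAbelianGroup (K × M) ⧸ TensorRels R K M) =
      QuotientAddGroup.mk y := by
  rw [eq_comm, QuotientAddGroup.eq]
  convert h using 1
  abel

lemma add_tm (k k' : K) (m : M) : tm R (k + k') m = tm R k m + tm R k' m := by
  refine tm_rel (R := R) (x := FreeAbelianGroup.of (k + k', m))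
    (y := FreeAbelianGroup.of (k, m) + FreeAbelianGroup.of (k', m)) ?_
  rw [← sub_sub]
  exact AddSubgroup.subset_closure (Or.inl <| Or.inl ⟨k, k', m, rfl⟩)

lemma tm_add (k : K) (m m' : M) : tm R k (m + m') = tm R k m + tm R k m' := by
  refine tm_rel (R := R) (x := FreeAbelianGroup.of (k, m + m'))
    (y := FreeAbelianGroup.of (k, m) + FreeAbelianGroup.of (k, m')) ?_
  rw [← sub_sub]
  exact AddSubgroup.subset_closure (Or.inl <| Or.inr ⟨k, m, m', rfl⟩)

lemma smul_tm (r : R) (k : K) (m : M) : tm R (op r • k) m = tm R k (r • m) :=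
  tm_rel (AddSubgroup.subset_closure (Or.inr ⟨r, k, m, rfl⟩))

/-- Bilinear version of pure tensors. -/
def tmHom (R : Type u) [Ring R] (K M : Type u) [AddCommGroup K] [Module Rᵐᵒᵖ K]
    [AddCommGroup M] [Module R M] : K →+ M →+ NCTensor R K M :=
  AddMonoidHom.mk' (fun k => AddMonoidHom.mk' (fun m => tm R k m) (tm_add k))
    (fun k k' => by ext m; exact add_tm k k' m)

@[simp] lemma tmHom_apply (k : K) (m : M) : tmHom R K M k m = tm R k m := rfl

/-- Universal property. -/
def tlift (b : K → M → Q) (h1 : ∀ k k' m, b (k + k') m = b k m + b k' m)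
    (h2 : ∀ k m m', b k (m + m') = b k m + b k m')
    (h3 : ∀ (r : R) k m, b (op r • k) m = b k (r • m)) : NCTensor R K M →+ Q :=
  QuotientAddGroup.lift (TensorRels R K M) (FreeAbelianGroup.lift fun p : K × M => b p.1 p.2) (by
    refine (AddSubgroup.closure_le _).2 ?_
    rintro x ((⟨k₁, k₂, m, rfl⟩ | ⟨k, m₁, m₂, rfl⟩) | ⟨r, k, m, rfl⟩)
    · simp [AddMonoidHom.mem_ker, h1]
    · simp [AddMonoidHom.mem_ker, h2]
    · simp [AddMonoidHom.mem_ker, h3])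

@[simp] lemma tlift_tm (b : K → M → Q) (h1 : ∀ k k' m, b (k + k') m = b k m + b k' m)
    (h2 : ∀ k m m', b k (m + m') = b k m + b k m')
    (h3 : ∀ (r : R) k m, b (op r • k) m = b k (r • m)) (k : K) (m : M) :
    tlift b h1 h2 h3 (tm R k m) = b k m :=
  FreeAbelianGroup.lift_apply_of _ _

@[simp] lemma tensorCongr_tm {M' : Type u} [AddCommGroup M'] [Module R M']
    (μ : K →ₗ[Rᵐᵒᵖ] L) (ν : M →ₗ[R] M') (k : K) (m : M) :
    tensorCongr R μ ν (tm R k m) = tm R (μ k) (ν m) :=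
  congrArg QuotientAddGroup.mk (FreeAbelianGroup.lift_apply_of _ _)

lemma tens_hom_ext {f g : NCTensor R K M →+ Q} (h : ∀ k m, f (tm R k m) = g (tm R k m)) :
    f = g := by
  apply QuotientAddGroup.addMonoidHom_ext
  apply FreeAbelianGroup.lift_ext
  rintro ⟨k, m⟩
  exact h k m

end Tens

section FlatToFac
variable {M : Type u} [AddCommGroup M] [Module R M]

/-- Matrix acting on columns, as a map of right modules. -/
def colMap {m n : ℕ} (F : Matrix (Fin m) (Fin n) R) : (Fin n → R) →ₗ[Rᵐᵒᵖ] (Fin m → R) where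
  toFun v := F *ᵥ v
  map_add' := mulVec_add F
  map_smul' r v := by
    ext i
    simp [mulVec, dotProduct, Finset.sum_mul, mul_assoc]

lemma Fac_of_flat (h : ModFlat R M) : Fac R M := by
  classical
  intro m n F φ hφ
  let A := colMap F
  let K := LinearMap.ker A
  let S : AddSubgroup (Fin n → M) :=
    AddSubgroup.closure {x | ∃ v ∈ K, ∃ e : M, x = fun j => v j • e}
  let b : ((Fin n → R) ⧸ K) → M → ((Fin n → M) ⧸ S) := fun q e =>
    QuotientAddGroup.mk (fun j => (Quotient.out q) j • e)
  have hb : ∀ v e, b (K.mkQ v) e = QuotientAddGroup.mk (fun j => v j • e) := by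
    intro v e
    simp only [b]
    rw [QuotientAddGroup.eq]
    refine AddSubgroup.subset_closure ⟨v - Quotient.out (K.mkQ v), ?_, e, ?_⟩
    · exact (Submodule.Quotient.eq K).1 (Quotient.out_eq (K.mkQ v)).symm
    · ext j
      simp [sub_smul]
      abel
  let B : NCTensor R ((Fin n → R) ⧸ K) M →+ ((Fin n → M) ⧸ S) := tlift b
    (by
      intro k k' e
      obtain ⟨k, rfl⟩ := K.mkQ_surjective k
      obtain ⟨k', rfl⟩ := K.mkQ_surjective k'
      rw [← map_add, hb, hb, hb, ← QuotientAddGroup.mk_add]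
      congr 1; ext j; simp [add_smul])
    (by
      intro k e e'
      obtain ⟨k, rfl⟩ := K.mkQ_surjective k
      rw [hb, hb, hb, ← QuotientAddGroup.mk_add]
      congr 1; ext j; simp)
    (by
      intro r k e
      obtain ⟨k, rfl⟩ := K.mkQ_surjective k
      rw [← map_smul, hb, hb]
      congr 1; ext j; simp [mul_smul])
  let μ : ((Fin n → R) ⧸ K) →ₗ[Rᵐᵒᵖ] (Fin m → R) := K.liftQ A le_rfl
  have hμ : Injective μ := by
    rw [← LinearMap.ker_eq_bot]
    exact Submodule.ker_liftQ_eq_bot _ _ _ le_rfl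
  have hinj := h _ _ μ hμ
  let t : NCTensor R ((Fin n → R) ⧸ K) M := ∑ j, tm R (K.mkQ (Pi.single j 1)) (φ j)
  have ht : t = 0 := by
    apply hinj
    rw [map_zero]
    simp only [t, map_sum, tensorCongr_tm]
    have h1 : ∀ j, tm R (μ (K.mkQ (Pi.single j 1))) ((LinearMap.id : M →ₗ[R] M) (φ j)) =
        ∑ i, tmHom R (Fin m → R) M (Pi.single i 1) (F i j • φ j) := by
      intro j
      have : μ (K.mkQ (Pi.single j 1)) = ∑ i, op (F i j) • (Pi.single i 1 : Fin m → R) := by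
        ext i
        simp [μ, A, colMap, Finset.sum_apply, Pi.single_apply]
      rw [this, LinearMap.id_apply, ← tmHom_apply, map_sum, AddMonoidHom.finsetSum_apply]
      refine Finset.sum_congr rfl fun i _ => ?_
      rw [tmHom_apply, smul_tm, tmHom_apply]
    simp only [h1]
    rw [Finset.sum_comm]
    simp only [← map_sum, hφ, map_zero, Finset.sum_const_zero]
  have hφS : φ ∈ S := by
    rw [← QuotientAddGroup.eq_zero_iff, ← map_zero B, ← ht]
    simp only [t, map_sum, B, tlift_tm, hb]
    have : ∀ x : Fin n → (Fin n → M), ∑ j, (QuotientAddGroup.mk (x j) : (Fin n → M) ⧸ S) =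
        QuotientAddGroup.mk (∑ j, x j) := fun x =>
      (map_sum (QuotientAddGroup.mk' S) x Finset.univ).symm
    rw [this]
    congr 1
    ext j
    simp [Finset.sum_apply, Pi.single_apply, ite_smul]
  have key : ∀ x ∈ S, ∃ (κ : Type) (_ : Fintype κ) (v : κ → (Fin n → R)) (y : κ → M),
      (∀ k, F *ᵥ v k = 0) ∧ ∀ j, x j = ∑ k, v k j • y k := by
    intro x hx
    induction hx using AddSubgroup.closure_induction with
    | mem x hx =>
      obtain ⟨v, hv, e, rfl⟩ := hx
      exact ⟨Unit, inferInstance, fun _ => v, fun _ => e, fun _ => hv, fun j => by simp⟩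
    | zero => exact ⟨Empty, inferInstance, Empty.elim, Empty.elim, fun k => k.elim,
        fun j => by simp⟩
    | add x y _ _ hx hy =>
      obtain ⟨κ, _, v, z, h1, h2⟩ := hx
      obtain ⟨κ', _, v', z', h1', h2'⟩ := hy
      refine ⟨κ ⊕ κ', inferInstance, Sum.elim v v', Sum.elim z z', ?_, ?_⟩
      · rintro (k | k)
        · exact h1 k
        · exact h1' k
      · intro j
        simp [h2, h2']
    | neg x _ hx =>
      obtain ⟨κ, _, v, z, h1, h2⟩ := hx
      exact ⟨κ, inferInstance, v, fun k => - z k, h1, fun j => by simp [h2]⟩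
  obtain ⟨κ, _, v, y, h1, h2⟩ := key φ hφS
  let e := Fintype.equivFin κ
  refine ⟨Fintype.card κ, Matrix.of fun j k => v (e.symm k) j, fun k => y (e.symm k), ?_, ?_⟩
  · ext i k
    exact congrFun (h1 (e.symm k)) i
  · intro j
    rw [h2]
    exact (Equiv.sum_comp e.symm (fun k => v k j • y k)).symm

end FlatToFac

section FacToFlat
variable {M : Type u} [AddCommGroup M] [Module R M]

/-- The element `k · f`. -/
noncomputable def kf {K : Type u} [AddCommGroup K] [Module Rᵐᵒᵖ K] : K →+ (M →₀ R) →+ (M →₀ K) :=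
  AddMonoidHom.mk' (fun k => AddMonoidHom.mk' (fun f => f.mapRange (fun r => op r • k) (by simp))
    (fun f g => by ext; simp [add_smul])) (fun k k' => by ext; simp)

lemma kf_apply {K : Type u} [AddCommGroup K] [Module Rᵐᵒᵖ K] (k : K) (f : M →₀ R) (m : M) :
    kf k f m = op (f m) • k := by simp [kf]

lemma kf_single {K : Type u} [AddCommGroup K] [Module Rᵐᵒᵖ K] (k : K) (m : M) (r : R) :
    kf k (Finsupp.single m r) = Finsupp.single m (op r • k) := by simp [kf]

lemma kf_smul {K : Type u} [AddCommGroup K] [Module Rᵐᵒᵖ K] (k : K) (f : M →₀ R) (r : R) :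
    kf (op r • k) f = kf k (r • f) := by
  ext m
  simp [kf_apply, mul_smul]

/-- Projection from the free module. -/
noncomputable abbrev prj (R : Type u) [Ring R] (M : Type u) [AddCommGroup M] [Module R M] :
    (M →₀ R) →ₗ[R] M := Finsupp.linearCombination R id

/-- Relations. -/
noncomputable def SK (R : Type u) [Ring R] (K M : Type u) [AddCommGroup K] [Module Rᵐᵒᵖ K] [AddCommGroup M]
    [Module R M] : AddSubgroup (M →₀ K) :=
  AddSubgroup.closure {w | ∃ (k : K) (n : M →₀ R), prj R M n = 0 ∧ w = kf k n}

/-- Presentation map. -/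
noncomputable def TT (R : Type u) [Ring R] (K M : Type u) [AddCommGroup K] [Module Rᵐᵒᵖ K] [AddCommGroup M]
    [Module R M] : (M →₀ K) →+ NCTensor R K M :=
  Finsupp.liftAddHom (fun m => (tmHom R K M).flip m)

lemma TT_single {K : Type u} [AddCommGroup K] [Module Rᵐᵒᵖ K] (m : M) (k : K) :
    TT R K M (Finsupp.single m k) = tm R k m := by
  simp [TT]

lemma TT_kf {K : Type u} [AddCommGroup K] [Module Rᵐᵒᵖ K] (k : K) (n : M →₀ R) :
    TT R K M (kf k n) = tm R k (prj R M n) := by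
  have : (TT R K M).comp (kf k) = (tmHom R K M k).comp (prj R M).toAddMonoidHom := by
    ext m r
    simp [kf_single, TT_single, smul_tm]
  exact DFunLike.congr_fun this n

lemma TT_of_SK {K : Type u} [AddCommGroup K] [Module Rᵐᵒᵖ K] {w : M →₀ K}
    (hw : w ∈ SK R K M) : TT R K M w = 0 := by
  have : SK R K M ≤ (TT R K M).ker := by
    refine (AddSubgroup.closure_le _).2 ?_
    rintro _ ⟨k, n, hn, rfl⟩
    have : TT R K M (kf k n) = 0 := by
      rw [TT_kf, hn, ← tmHom_apply, map_zero]
    exact this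
  exact this hw

lemma SK_of_TT {K : Type u} [AddCommGroup K] [Module Rᵐᵒᵖ K] {w : M →₀ K}
    (hw : TT R K M w = 0) : w ∈ SK R K M := by
  have hrel : ∀ x y : M →₀ K, (∃ k n, prj R M n = 0 ∧ x - y = kf k n) →
      (QuotientAddGroup.mk x : (M →₀ K) ⧸ SK R K M) = QuotientAddGroup.mk y := by
    rintro x y ⟨k, n, hn, h⟩
    rw [eq_comm, QuotientAddGroup.eq, neg_add_eq_sub, h]
    exact AddSubgroup.subset_closure ⟨k, n, hn, rfl⟩
  let B : NCTensor R K M →+ ((M →₀ K) ⧸ SK R K M) :=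
    tlift (fun k m => QuotientAddGroup.mk (Finsupp.single m k))
      (by intro k k' m; rw [← QuotientAddGroup.mk_add, Finsupp.single_add])
      (by
        intro k m m'
        rw [← QuotientAddGroup.mk_add]
        refine hrel _ _ ⟨k, Finsupp.single (m + m') 1 - (Finsupp.single m 1 +
          Finsupp.single m' 1), ?_, ?_⟩
        · simp
        · rw [map_sub, map_add]
          simp [kf_single])
      (by
        intro r k m
        refine hrel _ _ ⟨k, Finsupp.single m r - Finsupp.single (r • m) 1, ?_, ?_⟩
        · simp
        · rw [map_sub]
          simp [kf_single])
  have : B.comp (TT R K M) = QuotientAddGroup.mk' (SK R K M) := by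
    ext m k
    simp [TT_single, B]
  have h := DFunLike.congr_fun this w
  rw [AddMonoidHom.comp_apply, hw, map_zero] at h
  exact (QuotientAddGroup.eq_zero_iff w).1 h.symm

lemma TT_surj {K : Type u} [AddCommGroup K] [Module Rᵐᵒᵖ K] : Surjective (TT R K M) := by
  intro x
  obtain ⟨x, rfl⟩ := QuotientAddGroup.mk_surjective x
  induction x using FreeAbelianGroup.induction_on with
  | zero => exact ⟨0, map_zero _⟩
  | of p => exact ⟨Finsupp.single p.2 p.1, TT_single _ _⟩
  | neg p h =>
    obtain ⟨w, hw⟩ := h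
    exact ⟨-w, by rw [map_neg, hw]; rfl⟩
  | add x y hx hy =>
    obtain ⟨w, hw⟩ := hx
    obtain ⟨w', hw'⟩ := hy
    exact ⟨w + w', by rw [map_add, hw, hw']; rfl⟩

/-- Action of an endomorphism of the free module. -/
noncomputable def thK (K : Type u) [AddCommGroup K] [Module Rᵐᵒᵖ K] (θ : (M →₀ R) →ₗ[R] (M →₀ R)) :
    (M →₀ K) →+ (M →₀ K) :=
  Finsupp.liftAddHom (fun m => kf.flip (θ (Finsupp.single m 1)))

lemma thK_single {K : Type u} [AddCommGroup K] [Module Rᵐᵒᵖ K] (θ : (M →₀ R) →ₗ[R] (M →₀ R))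
    (m : M) (k : K) : thK K θ (Finsupp.single m k) = kf k (θ (Finsupp.single m 1)) := by
  simp [thK]

lemma thK_kf {K : Type u} [AddCommGroup K] [Module Rᵐᵒᵖ K] (θ : (M →₀ R) →ₗ[R] (M →₀ R))
    (k : K) (f : M →₀ R) : thK K θ (kf k f) = kf k (θ f) := by
  have : (thK K θ).comp (kf k) = (kf k).comp θ.toAddMonoidHom := by
    refine Finsupp.addHom_ext fun m r => ?_
    simp only [AddMonoidHom.comp_apply, kf_single, thK_single, kf_smul, ← map_smul]
    simp
  exact DFunLike.congr_fun this f

lemma thK_comp {K : Type u} [AddCommGroup K] [Module Rᵐᵒᵖ K] (θ θ' : (M →₀ R) →ₗ[R] (M →₀ R))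
    (w : M →₀ K) : thK K (θ ∘ₗ θ') w = thK K θ (thK K θ' w) := by
  have : thK K (θ ∘ₗ θ') = (thK K θ).comp (thK K θ') := by
    refine Finsupp.addHom_ext fun m r => ?_
    simp only [AddMonoidHom.comp_apply, thK_single, thK_kf, LinearMap.comp_apply]
  exact DFunLike.congr_fun this w

lemma thK_nat {K L : Type u} [AddCommGroup K] [Module Rᵐᵒᵖ K] [AddCommGroup L] [Module Rᵐᵒᵖ L]
    (μ : K →ₗ[Rᵐᵒᵖ] L) (θ : (M →₀ R) →ₗ[R] (M →₀ R)) (w : M →₀ K) :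
    thK L θ (Finsupp.mapRange.addMonoidHom μ.toAddMonoidHom w) =
      Finsupp.mapRange.addMonoidHom μ.toAddMonoidHom (thK K θ w) := by
  have : (thK L θ).comp (Finsupp.mapRange.addMonoidHom μ.toAddMonoidHom) =
      (Finsupp.mapRange.addMonoidHom μ.toAddMonoidHom).comp (thK K θ) := by
    refine Finsupp.addHom_ext fun m r => ?_
    ext m'
    simp [thK_single, kf_apply]
  exact DFunLike.congr_fun this w

lemma thK_sub {K : Type u} [AddCommGroup K] [Module Rᵐᵒᵖ K] (θ : (M →₀ R) →ₗ[R] (M →₀ R))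
    (hθ : ∀ f, prj R M (θ f) = prj R M f) (w : M →₀ K) : w - thK K θ w ∈ SK R K M := by
  induction w using Finsupp.induction_linear with
  | zero => simpa using (SK R K M).zero_mem
  | add f g hf hg =>
    rw [map_add, add_sub_add_comm]
    exact (SK R K M).add_mem hf hg
  | single m k =>
    refine AddSubgroup.subset_closure ⟨k, Finsupp.single m 1 - θ (Finsupp.single m 1), ?_, ?_⟩
    · rw [map_sub, hθ, sub_self]
    · rw [map_sub, kf_single, thK_single]
      simp

lemma exists_theta (h : Fac R M) (n : M →₀ R) (hn : prj R M n = 0) :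
    ∃ θ : (M →₀ R) →ₗ[R] (M →₀ R), (∀ f, prj R M (θ f) = prj R M f) ∧ θ n = 0 := by
  classical
  let S := n.support
  let e := S.equivFin
  have hsum : ∀ {X : Type u} [AddCommGroup X] (g : M → X),
      ∑ j, g (e.symm j) = ∑ m ∈ S, g m := by
    intro X _ g
    rw [Equiv.sum_comp e.symm (fun m => g m), Finset.sum_coe_sort S g]
  obtain ⟨p, G, ψ, hFG, hψ⟩ := h 1 _ (Matrix.of fun _ j => n (e.symm j)) (fun j => (e.symm j : M))
    (fun i => by
      rw [← hn]
      exact hsum (fun m => n m • m))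
  let g : M → (M →₀ R) := fun m => if hm : m ∈ S then
    ∑ k, G (e ⟨m, hm⟩) k • Finsupp.single (ψ k) 1 else Finsupp.single m 1
  refine ⟨Finsupp.linearCombination R g, fun f => ?_, ?_⟩
  · have : prj R M ∘ₗ Finsupp.linearCombination R g = prj R M := by
      refine Finsupp.lhom_ext' fun m => LinearMap.ext_ring ?_
      simp only [LinearMap.comp_apply, Finsupp.lsingle_apply, Finsupp.linearCombination_single,
        one_smul, id, g]
      split_ifs with hm
      · have := hψ (e ⟨m, hm⟩)
        simp only [Equiv.symm_apply_apply] at this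
        simp only [map_sum, map_smul, Finsupp.linearCombination_single, one_smul, id]
        exact this.symm
      · simp
    exact LinearMap.congr_fun this f
  · rw [Finsupp.linearCombination_apply, Finsupp.sum]
    rw [show n.support = S from rfl, ← hsum (fun m => n m • g m)]
    have hg : ∀ j, g (e.symm j) = ∑ k, G j k • Finsupp.single (ψ k) 1 := by
      intro j
      simp [g]
    simp only [hg, Finset.smul_sum, smul_smul]
    rw [Finset.sum_comm]
    refine Finset.sum_eq_zero fun k _ => ?_
    rw [← Finset.sum_smul]
    have := congrFun (congrFun hFG 0) k
    simp only [Matrix.mul_apply, Matrix.of_apply, Matrix.zero_apply] at this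
    rw [this, zero_smul]

lemma exists_theta' (h : Fac R M) {L : Type u} [AddCommGroup L] [Module Rᵐᵒᵖ L] (u : M →₀ L)
    (hu : u ∈ SK R L M) : ∀ θ' : (M →₀ R) →ₗ[R] (M →₀ R), (∀ f, prj R M (θ' f) = prj R M f) →
    ∃ θ : (M →₀ R) →ₗ[R] (M →₀ R), (∀ f, prj R M (θ f) = prj R M f) ∧
      thK L θ (thK L θ' u) = 0 := by
  induction hu using AddSubgroup.closure_induction with
  | mem x hx =>
    obtain ⟨l, n, hn, rfl⟩ := hx
    intro θ' hθ'
    obtain ⟨θ, h1, h2⟩ := exists_theta h (θ' n) (by rw [hθ', hn])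
    exact ⟨θ, h1, by rw [thK_kf, thK_kf, h2, map_zero]⟩
  | zero => exact fun θ' _ => ⟨LinearMap.id, fun _ => rfl, by simp⟩
  | add x y _ _ hx hy =>
    intro θ' hθ'
    obtain ⟨θ1, h1, h2⟩ := hx θ' hθ'
    obtain ⟨θ2, h3, h4⟩ := hy (θ1 ∘ₗ θ') (fun f => by simp only [LinearMap.comp_apply, h1, hθ'])
    refine ⟨θ2 ∘ₗ θ1, fun f => by simp only [LinearMap.comp_apply, h1, h3], ?_⟩
    rw [thK_comp] at h4
    rw [thK_comp, map_add, map_add, map_add, h2, h4]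
    simp
  | neg x _ hx =>
    intro θ' hθ'
    obtain ⟨θ1, h1, h2⟩ := hx θ' hθ'
    exact ⟨θ1, h1, by rw [map_neg, map_neg, h2, neg_zero]⟩

lemma flat_of_Fac (h : Fac R M) : ModFlat R M := by
  intro K L _ _ _ _ μ hμ
  rw [injective_iff_map_eq_zero]
  intro x hx
  obtain ⟨w, rfl⟩ := TT_surj x
  have hnat : tensorCongr R μ LinearMap.id (TT R K M w) =
      TT R L M (Finsupp.mapRange.addMonoidHom μ.toAddMonoidHom w) := by
    have : (tensorCongr R μ (LinearMap.id : M →ₗ[R] M)).comp (TT R K M) =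
        (TT R L M).comp (Finsupp.mapRange.addMonoidHom μ.toAddMonoidHom) := by
      refine Finsupp.addHom_ext fun m r => ?_
      simp [TT_single]
    exact DFunLike.congr_fun this w
  rw [hnat] at hx
  obtain ⟨θ, h1, h2⟩ := exists_theta' h _ (SK_of_TT hx) LinearMap.id (fun _ => rfl)
  rw [← thK_comp, LinearMap.comp_id, thK_nat] at h2
  have h3 : thK K θ w = 0 := by
    ext m
    apply hμ
    rw [Finsupp.zero_apply, map_zero]
    exact DFunLike.congr_fun h2 m
  have h4 := thK_sub θ h1 w
  rw [h3, sub_zero] at h4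
  exact TT_of_SK h4

end FacToFlat

section Swap

variable {M K L : Type u} [AddCommGroup M] [Module Rᵐᵒᵖ M] [AddCommGroup K] [Module R K]
  [Module Rᵐᵒᵖᵐᵒᵖ K] [AddCommGroup L] [Module R L] [Module Rᵐᵒᵖᵐᵒᵖ L]

/-- Swap of tensor factors. -/
def sw (h : ∀ (r : R) (k : K), op (op r) • k = r • k) :
    NCTensor Rᵐᵒᵖ K M →+ NCTensor R M K :=
  tlift (fun k m => tm R m k) (fun k k' m => tm_add m k k') (fun k m m' => add_tm m m' k)
    (fun r k m => by
      have := h (unop r) k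
      rw [op_unop] at this
      rw [this, ← smul_tm, op_unop])

/-- Swap of tensor factors, inverse. -/
def sw' (h : ∀ (r : R) (k : K), op (op r) • k = r • k) :
    NCTensor R M K →+ NCTensor Rᵐᵒᵖ K M :=
  tlift (fun m k => tm Rᵐᵒᵖ k m) (fun k k' m => tm_add m k k') (fun k m m' => add_tm m m' k)
    (fun r m k => by rw [← h, smul_tm])

lemma swap_inj (hK : ∀ (r : R) (k : K), op (op r) • k = r • k)
    (hL : ∀ (r : R) (k : L), op (op r) • k = r • k)
    (μ : K →ₗ[R] L) (μ' : K →ₗ[Rᵐᵒᵖᵐᵒᵖ] L) (hμ : ∀ k, μ k = μ' k) :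
    Injective (tensorCongr R (LinearMap.id : M →ₗ[Rᵐᵒᵖ] M) μ) ↔
      Injective (tensorCongr Rᵐᵒᵖ μ' (LinearMap.id : M →ₗ[Rᵐᵒᵖ] M)) := by
  have e1 : (sw' (M := M) hK).comp (sw hK) = AddMonoidHom.id _ :=
    tens_hom_ext (fun k m => by simp [sw, sw'])
  have e2 : (sw (M := M) hK).comp (sw' hK) = AddMonoidHom.id _ :=
    tens_hom_ext (fun k m => by simp [sw, sw'])
  have e3 : (sw' (M := M) hL).comp (sw hL) = AddMonoidHom.id _ :=
    tens_hom_ext (fun k m => by simp [sw, sw'])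
  have e4 : (sw (M := M) hL).comp (sw' hL) = AddMonoidHom.id _ :=
    tens_hom_ext (fun k m => by simp [sw, sw'])
  have c1 : tensorCongr R (LinearMap.id : M →ₗ[Rᵐᵒᵖ] M) μ =
      ((sw hL).comp (tensorCongr Rᵐᵒᵖ μ' (LinearMap.id : M →ₗ[Rᵐᵒᵖ] M))).comp (sw' hK) :=
    tens_hom_ext (fun k m => by simp [sw, sw', hμ])
  have c2 : tensorCongr Rᵐᵒᵖ μ' (LinearMap.id : M →ₗ[Rᵐᵒᵖ] M) =
      ((sw' hL).comp (tensorCongr R (LinearMap.id : M →ₗ[Rᵐᵒᵖ] M) μ)).comp (sw hK) :=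
    tens_hom_ext (fun k m => by simp [sw, sw', hμ])
  have i1 : Injective (sw (M := M) hK) :=
    LeftInverse.injective (g := sw' hK) (fun x => DFunLike.congr_fun e1 x)
  have i2 : Injective (sw' (M := M) hK) :=
    LeftInverse.injective (g := sw hK) (fun x => DFunLike.congr_fun e2 x)
  have i3 : Injective (sw (M := M) hL) :=
    LeftInverse.injective (g := sw' hL) (fun x => DFunLike.congr_fun e3 x)
  have i4 : Injective (sw' (M := M) hL) :=
    LeftInverse.injective (g := sw hL) (fun x => DFunLike.congr_fun e4 x)
  constructor
  · intro h
    rw [c2]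
    exact (i4.comp h).comp i1
  · intro h
    rw [c1]
    exact (i3.comp h).comp i2

end Swap

lemma flatRight_iff (M : Type u) [AddCommGroup M] [Module Rᵐᵒᵖ M] :
    ModFlatRight R M ↔ ModFlat Rᵐᵒᵖ M := by
  constructor
  · intro h K L _ _ _ _ μ hμ
    letI : Module R K := Module.compHom K (RingEquiv.opOp R).toRingHom
    letI : Module R L := Module.compHom L (RingEquiv.opOp R).toRingHom
    let μ' : K →ₗ[R] L :=
      { toFun := μ, map_add' := μ.map_add, map_smul' := fun r k => μ.map_smul (op (op r)) k }
    exact (swap_inj (fun _ _ => rfl) (fun _ _ => rfl) μ' μ (fun _ => rfl)).1 (h K L μ' hμ)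
  · intro h K L _ _ _ _ μ hμ
    letI : Module Rᵐᵒᵖᵐᵒᵖ K := Module.compHom K (RingEquiv.opOp R).symm.toRingHom
    letI : Module Rᵐᵒᵖᵐᵒᵖ L := Module.compHom L (RingEquiv.opOp R).symm.toRingHom
    let μ' : K →ₗ[Rᵐᵒᵖᵐᵒᵖ] L :=
      { toFun := μ, map_add' := μ.map_add,
        map_smul' := fun r k => μ.map_smul ((RingEquiv.opOp R).symm r) k }
    exact (swap_inj (fun _ _ => rfl) (fun _ _ => rfl) μ μ' (fun _ => rfl)).2 (h K L μ' hμ)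

lemma flat_iff (M : Type u) [AddCommGroup M] [Module R M] : ModFlat R M ↔ Fac R M :=
  ⟨Fac_of_flat, flat_of_Fac⟩

end FlatPart

section Final

variable {R : Type u} [Ring R]

/-- `R` as a right module over itself is `Rᵐᵒᵖ` as a left module over itself. -/
def opEq (R : Type u) [Ring R] : R ≃ₗ[Rᵐᵒᵖ] Rᵐᵒᵖ where
  toFun := op
  invFun := unop
  left_inv _ := rfl
  right_inv _ := rfl
  map_add' _ _ := rfl
  map_smul' _ _ := rfl

lemma fp_of_equiv {S : Type u} [Ring S] {M N : Type u} [AddCommGroup M] [Module S M]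
    [AddCommGroup N] [Module S N] (e : M ≃ₗ[S] N) (h : Module.FinitePresentation S M) :
    Module.FinitePresentation S N :=
  Module.FinitePresentation.of_equiv e

lemma RightCoherent_iff : RightCoherent R ↔ Cohr R := by
  rw [← Cohl_op, ← LeftCoherent_iff]
  constructor
  · intro h I hI
    exact fp_of_equiv ((opEq R).symm.submoduleMap I).symm (h _ (hI.map _))
  · intro h I hI
    exact fp_of_equiv ((opEq R).submoduleMap I).symm (h _ (hI.map _))

lemma RightIF_iff : RightIF R ↔ IFr R := by
  rw [← IFl_op, ← LeftIF_iff]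
  constructor
  · intro h M _ _ hM
    obtain ⟨ι, f, hf⟩ := h M hM
    exact ⟨ι, (Finsupp.mapRange.linearEquiv (opEq R)).toLinearMap ∘ₗ f,
      (Finsupp.mapRange.linearEquiv (α := ι) (opEq R)).injective.comp hf⟩
  · intro h M _ _ hM
    obtain ⟨ι, f, hf⟩ := h M hM
    exact ⟨ι, (Finsupp.mapRange.linearEquiv (opEq R).symm).toLinearMap ∘ₗ f,
      (Finsupp.mapRange.linearEquiv (α := ι) (opEq R).symm).injective.comp hf⟩

lemma FPIm_of_equiv {S : Type u} [Ring S] {M N : Type u} [AddCommGroup M] [Module S M]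
    [AddCommGroup N] [Module S N] (e : M ≃ₗ[S] N) (h : FPIm S M) : FPIm S N := by
  intro a b F φ hφ
  obtain ⟨ψ, hψ⟩ := h a b F (fun i => e.symm (φ i)) (fun x hx => by
    have := congrArg e.symm (hφ x hx)
    simpa using this)
  refine ⟨fun j => e (ψ j), fun i => ?_⟩
  have := congrArg e (hψ i)
  simpa using this

lemma FPInjectiveRight_iff : FPInjective Rᵐᵒᵖ R ↔ FPIr R := by
  rw [← FPIl_op, FPIl_iff, FPInjective_iff]
  exact ⟨FPIm_of_equiv (opEq R), FPIm_of_equiv (opEq R).symm⟩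

lemma FPInjective_of_injective {M : Type u} [AddCommGroup M] [Module R M]
    (h : Module.Injective R M) : FPInjective R M := by
  intro F _ _ hF
  obtain ⟨n, f, hf, -⟩ := fp_pres (R := R) (M := F)
  rw [extVanish_iff_extProp f hf]
  intro g
  exact h.out (LinearMap.ker f).subtype (Submodule.subtype_injective _) g

lemma WQF_iff : WQF R ↔ Cohl R ∧ Cohr R ∧ FPIl R ∧ FPIr R := by
  rw [WQF, LeftCoherent_iff, RightCoherent_iff, FPInjectiveRight_iff, FPInjective_iff, FPIl_iff]

lemma WQF_iff_IF : WQF R ↔ IFl R ∧ IFr R := by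
  rw [WQF_iff]
  constructor
  · rintro ⟨h1, h2, h3, h4⟩
    exact ⟨IFl_of_Cohr h2 h4, IFr_of_Cohl h1 h3⟩
  · rintro ⟨h1, h2⟩
    have a := FPIr_of_IFl h1
    have b := FPIl_of_IFr h2
    exact ⟨Cohl_of_IFr h2 a, Cohr_of_IFl h1 b, b, a⟩

end Final


/-- Theorem 2.8: characterizations of weakly quasi-Frobenius rings. -/
theorem stmt_9 (R : Type u) [Ring R] :
    List.TFAE
      [WQF R,
       LeftIF R ∧ RightIF R,
       LeftCoherent R ∧ FPInjective R R ∧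
         (∀ (M : Type u) [AddCommGroup M] [Module R M],
           Module.FinitePresentation R M → CyclicModule R M → EmbedsInFree R M),
       (∀ (M : Type u) [AddCommGroup M] [Module R M], FPInjective R M → ModFlat R M) ∧
         (∀ (M : Type u) [AddCommGroup M] [Module Rᵐᵒᵖ M], FPInjective Rᵐᵒᵖ M →
           ModFlatRight R M),
       (∀ (M : Type u) [AddCommGroup M] [Module R M], Module.Injective R M → ModFlat R M) ∧
         (∀ (M : Type u) [AddCommGroup M] [Module Rᵐᵒᵖ M], Module.Injective Rᵐᵒᵖ M →
           ModFlatRight R M)] := by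
  tfae_have 1 ↔ 2 := by
    rw [WQF_iff_IF, LeftIF_iff, RightIF_iff]
  tfae_have 1 → 3 := by
    intro h
    refine ⟨h.1, h.2.2.1, fun M _ _ hM _ => ?_⟩
    exact LeftIF_iff.2 (WQF_iff_IF.1 h).1 M hM
  tfae_have 3 → 1 := by
    rintro ⟨h1, h2, h3⟩
    have h := IFl_of_three h1 h2 h3
    have h2' := FPIl_iff.2 (FPInjective_iff.1 h2)
    exact WQF_iff.2 ⟨LeftCoherent_iff.1 h1, Cohr_of_IFl h h2', h2', FPIr_of_IFl h⟩
  tfae_have 1 → 4 := by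
    intro h
    obtain ⟨h1, h2⟩ := WQF_iff_IF.1 h
    refine ⟨fun M _ _ hM => ?_, fun M _ _ hM => ?_⟩
    · exact (flat_iff M).2 (Fac_of h1 (FPInjective_iff.1 hM))
    · exact (flatRight_iff M).2 ((flat_iff M).2 (Fac_of (IFl_op.2 h2) (FPInjective_iff.1 hM)))
  tfae_have 4 → 5 := by
    rintro ⟨h1, h2⟩
    exact ⟨fun M _ _ hM => h1 M (FPInjective_of_injective hM),
      fun M _ _ hM => h2 M (FPInjective_of_injective hM)⟩
  tfae_have 5 → 1 := by
    rintro ⟨h1, h2⟩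
    refine WQF_iff_IF.2 ⟨IFl_of_Fac fun M _ _ hM => (flat_iff M).1 (h1 M hM),
      IFl_op.1 (IFl_of_Fac fun M _ _ hM => (flat_iff M).1 ((flatRight_iff M).1 (h2 M hM)))⟩
  tfae_finish
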